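/- arXiv:1908.01749 — 3 statements merged into one kernel-verified Lean document; each statement's English description precedes it below -/
import Mathlib

section
/- Let R be a Noetherian local ring whose total quotient ring Q is semisimple, and M a finite R-module with a resolution 0 → F₁ →^φ F₀ → M → 0 by finite free modules. For k ≥ 1, M is k-torsion free (i.e., Ext^i_R(D(M), R) = 0 for 1 ≤ i ≤ k, where D(M) = Coker(φ*)) if and only if depth(R_𝔭) ≥ k+1 for every prime 𝔭 in the support of D(M). -/
open CategoryTheory

noncomputable def extGroup (R : Type) [CommRing R] (i : ℕ) (M N : Type)
    [AddCommGroup M] [Module R M] [AddCommGroup N] [Module R N] : Type :=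
  ((Ext R (ModuleCat R) i).obj (Opposite.op (ModuleCat.of R M))).obj (ModuleCat.of R N)

noncomputable instance (R : Type) [CommRing R] (i : ℕ) (M N : Type)
    [AddCommGroup M] [Module R M] [AddCommGroup N] [Module R N] :
    AddCommGroup (extGroup R i M N) := by unfold extGroup; infer_instance

noncomputable instance (R : Type) [CommRing R] (i : ℕ) (M N : Type)
    [AddCommGroup M] [Module R M] [AddCommGroup N] [Module R N] :
    Module R (extGroup R i M N) := by unfold extGroup; infer_instance

/-- The depth of a Noetherian local ring `A`, i.e. `grade(𝔪, A)`:
the least `i` with `Ext^i_A(A/𝔪, A) ≠ 0`. -/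
noncomputable def depthOf (A : Type) [CommRing A] [IsLocalRing A] : ℕ :=
  sInf {i | Nontrivial (extGroup A i (IsLocalRing.ResidueField A) A)}

section

open Abelian

theorem subsingleton_Ext_succ_iff {R : Type} [CommRing R] (X Y : ModuleCat.{0} R) (n : ℕ) :
    Subsingleton (((Ext R (ModuleCat R) (n + 1)).obj (Opposite.op X)).obj Y) ↔
      Subsingleton (Abelian.Ext X Y (n + 1)) := by
  let P := projectiveResolution X
  rw [← ModuleCat.isZero_iff_subsingleton, (P.isoExt (n + 1) Y).isZero_iff,
    ← HomologicalComplex.exactAt_iff_isZero_homology,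
    HomologicalComplex.exactAt_iff' _ n (n + 1) (n + 2) (by simp) (by simp),
    ShortComplex.moduleCat_exact_iff]
  constructor
  · intro h
    refine subsingleton_of_forall_eq 0 fun α ↦ ?_
    obtain ⟨f, hf, rfl⟩ := P.extMk_surjective α (n + 2) rfl
    rw [P.extMk_eq_zero_iff f _ rfl hf n rfl]
    exact h f hf
  · intro h f hf
    exact (P.extMk_eq_zero_iff f (n + 2) rfl hf n rfl).1 (Subsingleton.elim _ _)

theorem subsingleton_Ext_zero_iff {R : Type} [CommRing R] (X Y : ModuleCat.{0} R) :
    Subsingleton (((Ext R (ModuleCat R) 0).obj (Opposite.op X)).obj Y) ↔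
      Subsingleton (Abelian.Ext X Y 0) := by
  let P := projectiveResolution X
  rw [← ModuleCat.isZero_iff_subsingleton, (P.isoExt 0 Y).isZero_iff,
    ← HomologicalComplex.exactAt_iff_isZero_homology,
    HomologicalComplex.exactAt_iff' _ 0 0 1 (by simp) (by simp),
    ShortComplex.moduleCat_exact_iff, Abelian.Ext.addEquiv₀.subsingleton_congr]
  constructor
  · intro h
    refine subsingleton_of_forall_eq 0 fun g ↦ ?_
    obtain ⟨x, hx⟩ := h (P.π.f 0 ≫ g)
      (P.complex_d_comp_π_f_zero_assoc g |>.trans Limits.zero_comp)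
    have hd : (P.complex.linearYonedaObj R Y).d 0 0 = 0 :=
      HomologicalComplex.shape _ _ _ (by simp)
    have hg : P.π.f 0 ≫ g = 0 := by
      rw [← hx]
      exact DFunLike.congr_fun (congrArg ModuleCat.Hom.hom hd) x
    exact (cancel_epi (P.π.f 0)).1 (hg.trans Limits.comp_zero.symm)
  · intro h f hf
    refine ⟨0, ?_⟩
    have h0 : P.exact₀.desc f hf = 0 := Subsingleton.elim (α := X ⟶ Y) _ _
    rw [map_zero, ← P.exact₀.g_desc f hf, h0, Limits.comp_zero]
    rfl

/-- Vanishing of `Ext` does not depend on whether it is computed by deriving `Hom` in the first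
variable or as morphisms in the derived category. -/
theorem subsingleton_extGroup_iff (R : Type) [CommRing R] (i : ℕ) (M N : Type)
    [AddCommGroup M] [Module R M] [AddCommGroup N] [Module R N] :
    Subsingleton (extGroup R i M N) ↔
      Subsingleton (Abelian.Ext (ModuleCat.of R M) (ModuleCat.of R N) i) := by
  match i with
  | 0 => exact subsingleton_Ext_zero_iff _ _
  | i + 1 => exact subsingleton_Ext_succ_iff _ _ i

/-- If `r` annihilates `N` and is regular on `M` with cokernel `M'`, then the vanishing range of
`Ext N M` is one longer than that of `Ext N M'`. -/
theorem subsingleton_ext_lt_succ_iff_of_shortExact {R : Type} [CommRing R]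
    {M : ModuleCat.{0} R} (N : ModuleCat.{0} R) {r : R} (hr : r ∈ Module.annihilator R N)
    {f : M ⟶ M} (hf : f = r • 𝟙 M) {M' : ModuleCat.{0} R} {g : M ⟶ M'} {w : f ≫ g = 0}
    (hS : (ShortComplex.mk f g w).ShortExact) (n : ℕ) :
    (∀ i < n + 1, Subsingleton (Abelian.Ext N M i)) ↔
      ∀ i < n, Subsingleton (Abelian.Ext N M' i) := by
  have hzero (i : ℕ) (x : Abelian.Ext N M i) : x.comp (Ext.mk₀ f) (add_zero i) = 0 := by
    subst hf
    exact DFunLike.congr_fun (congrArg AddCommGrpCat.Hom.hom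
      (Ext.postcomp_smul_id_eq_zero_of_mem_annihilator (M := M) hr i)) x
  constructor
  · intro h i hi
    refine subsingleton_of_forall_eq 0 fun x ↦ ?_
    have := h i (by lia)
    have := h (i + 1) (by lia)
    obtain ⟨y, hy⟩ := Ext.covariant_sequence_exact₃ N hS x rfl
      (Subsingleton.elim (α := Abelian.Ext N M (i + 1)) _ _)
    rw [← hy, Subsingleton.elim (α := Abelian.Ext N M i) y 0, Ext.zero_comp]
  · intro h i hi
    refine subsingleton_of_forall_eq 0 fun x ↦ ?_
    match i with
    | 0 =>
      have := hS.mono_f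
      exact Ext.postcomp_mk₀_injective_of_mono N f ((hzero 0 x).trans (map_zero _).symm)
    | i + 1 =>
      have := h i (by lia)
      obtain ⟨y, hy⟩ := Ext.covariant_sequence_exact₁ N hS x (hzero _ x) rfl
      rw [← hy, Subsingleton.elim (α := Abelian.Ext N M' i) y 0, Ext.zero_comp]

theorem subsingleton_ext_zero_iff_exists_isSMulRegular {R : Type} [CommRing R]
    [IsNoetherianRing R] (N M : ModuleCat.{0} R) [Module.Finite R N] [Module.Finite R M] :
    Subsingleton (Abelian.Ext N M 0) ↔ ∃ r ∈ Module.annihilator R N, IsSMulRegular M r := by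
  rw [← IsSMulRegular.subsingleton_linearMap_iff]
  exact (Ext.addEquiv₀.trans ModuleCat.homAddEquiv).subsingleton_congr

theorem mapExtendScalars_smul_id {R A M N : Type*} [CommRing R] (S : Submonoid R)
    [CommRing A] [Algebra R A] [IsLocalization S A] [AddCommGroup M] [Module R M]
    [AddCommGroup N] [Module R N] [Module A N] [IsScalarTower R A N]
    (f : M →ₗ[R] N) [IsLocalizedModule S f] (r : R) :
    IsLocalizedModule.mapExtendScalars S f f A (r • LinearMap.id) =
      algebraMap R A r • LinearMap.id := by
  ext x
  simp [IsLocalizedModule.map_id]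

theorem localizedModuleFunctor_map_smul_id {R : Type} [CommRing R] (S : Submonoid R)
    (M : ModuleCat.{0} R) (r : R) :
    (ModuleCat.localizedModuleFunctor S).map (r • 𝟙 M) =
      algebraMap R (Localization S) r • 𝟙 (M.localizedModule S) :=
  ModuleCat.hom_ext (mapExtendScalars_smul_id S (M.localizedModuleMkLinearMap S) r)

theorem annihilator_residueField (A : Type*) [CommRing A] [IsLocalRing A] :
    Module.annihilator A (IsLocalRing.ResidueField A) = IsLocalRing.maximalIdeal A :=
  Ideal.annihilator_quotient

/-- `Ext D M` vanishes below degree `n` if and only if, at each prime `p` in the support of `D`,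
the localization of `M` has depth at least `n`. -/
theorem subsingleton_ext_lt_iff_forall_prime {R : Type} [CommRing R] [IsNoetherianRing R]
    (D : ModuleCat.{0} R) [Module.Finite R D] (n : ℕ) (M : ModuleCat.{0} R) [Module.Finite R M] :
    (∀ i < n, Subsingleton (Abelian.Ext D M i)) ↔
      ∀ (p : Ideal R) [p.IsPrime], Module.annihilator R D ≤ p → ∀ i < n,
        Subsingleton (Abelian.Ext
          (ModuleCat.of (Localization.AtPrime p)
            (IsLocalRing.ResidueField (Localization.AtPrime p)))
          (M.localizedModule p.primeCompl) i) := by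
  induction n generalizing M with
  | zero => simp
  | succ n ih =>
    by_cases h : ∃ r ∈ Module.annihilator R D, IsSMulRegular M r
    · obtain ⟨r, hr, hreg⟩ := h
      have hS := hreg.smulShortComplex_shortExact
      have : Module.Finite R (M.smulShortComplex r).X₃ :=
        inferInstanceAs (Module.Finite R (QuotSMulTop r M))
      refine ((subsingleton_ext_lt_succ_iff_of_shortExact (M := M) D hr
        (ModuleCat.smulShortComplex_f_eq_smul_id M r) hS n).trans (ih _)).trans ?_
      refine forall_congr' fun p ↦ forall_congr' fun _ ↦ forall_congr' fun hp ↦ ?_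
      have hrp : algebraMap R (Localization.AtPrime p) r ∈ Module.annihilator
          (Localization.AtPrime p) (IsLocalRing.ResidueField (Localization.AtPrime p)) := by
        rw [annihilator_residueField, IsLocalization.AtPrime.to_map_mem_maximal_iff _ p]
        exact hp hr
      refine (subsingleton_ext_lt_succ_iff_of_shortExact
        (ModuleCat.of (Localization.AtPrime p)
            (IsLocalRing.ResidueField (Localization.AtPrime p))) hrp ?_
        (hS.map_of_exact (ModuleCat.localizedModuleFunctor p.primeCompl)) n).symm
      exact localizedModuleFunctor_map_smul_id p.primeCompl M r
    · refine iff_of_false (fun H ↦ h ?_) fun H ↦ ?_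
      · exact (subsingleton_ext_zero_iff_exists_isSMulRegular D M).1 (H 0 n.succ_pos)
      have hexist : ∃ p ∈ associatedPrimes R M, Module.annihilator R D ≤ p := by
        refine (Ideal.subset_union_prime_finite (associatedPrimes.finite R M) ⊥ ⊥
          fun I hI _ _ ↦ IsAssociatedPrime.isPrime hI).mp ?_
        rw [biUnion_associatedPrimes_eq_compl_regular R M]
        exact fun r hr hreg ↦ h ⟨r, hr, hreg⟩
      obtain ⟨p, pass, hp⟩ := hexist
      have := pass.isPrime
      have : Module.Finite (Localization.AtPrime p) (M.localizedModule p.primeCompl) :=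
        Module.Finite.of_isLocalizedModule p.primeCompl
          (M.localizedModuleMkLinearMap p.primeCompl)
      obtain ⟨r, hr, hreg⟩ := (subsingleton_ext_zero_iff_exists_isSMulRegular _ _).1
        (H p hp 0 n.succ_pos)
      have hass : IsLocalRing.maximalIdeal (Localization.AtPrime p) ∈
          associatedPrimes (Localization.AtPrime p) (M.localizedModule p.primeCompl) := by
        apply Module.associatedPrimes.mem_associatedPrimes_of_comap_mem_associatedPrimes_of_isLocalizedModule
          p.primeCompl (M.localizedModuleMkLinearMap p.primeCompl)
        simpa [Localization.AtPrime.under_maximalIdeal] using pass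
      have hrm : r ∈ IsLocalRing.maximalIdeal (Localization.AtPrime p) := by
        exact (annihilator_residueField _).le hr
      have hmem := Set.mem_biUnion hass hrm
      rw [biUnion_associatedPrimes_eq_compl_regular] at hmem
      exact hmem hreg

/-- A Noetherian local ring has finite depth. -/
theorem exists_nontrivial_ext_residueField (A : Type) [CommRing A] [IsNoetherianRing A]
    [IsLocalRing A] :
    ∃ i, Nontrivial (extGroup A i (IsLocalRing.ResidueField A) A) := by
  by_contra! H
  have hlt : IsLocalRing.maximalIdeal A • (⊤ : Submodule A A) < ⊤ := by
    simpa [lt_top_iff_ne_top] using Ideal.IsPrime.ne_top'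
  obtain ⟨d, hd⟩ : ∃ d : ℕ, ringKrullDim A = d := by
    have hbot : ringKrullDim A ≠ ⊥ := ringKrullDim_ne_bot
    have htop : ringKrullDim A ≠ ⊤ := ringKrullDim_ne_top
    generalize ringKrullDim A = x at hbot htop
    cases x with
    | bot => exact (hbot rfl).elim
    | coe x =>
      cases x with
      | top => exact (htop rfl).elim
      | coe d => exact ⟨d, rfl⟩
  obtain ⟨rs, hlen, -, hrs⟩ := ModuleCat.exists_isRegular_of_exists_subsingleton_ext
    (IsLocalRing.maximalIdeal A) (d + 1) (ModuleCat.of A A) hlt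
    (ModuleCat.of A (IsLocalRing.ResidueField A))
    (by
      rw [Module.support_eq_zeroLocus]
      exact congrArg _ (congrArg _ (annihilator_residueField A)))
    fun i _ ↦ (subsingleton_extGroup_iff A i _ _).1 (H i)
  have hdim := ringKrullDim_add_length_eq_ringKrullDim_of_isRegular rs hrs
  rw [hlen, hd] at hdim
  generalize ringKrullDim (A ⧸ Ideal.ofList rs) = x at hdim
  cases x with
  | bot => simp at hdim
  | coe x =>
    cases x with
    | top =>
      have htop : (⊤ : ℕ∞) + ((d + 1 : ℕ) : ℕ∞) = (d : ℕ∞) := by exact_mod_cast hdim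
      simp at htop
    | coe m =>
      norm_cast at hdim
      lia

theorem le_depthOf_iff (A : Type) [CommRing A] [IsNoetherianRing A] [IsLocalRing A] (n : ℕ) :
    n ≤ depthOf A ↔ ∀ i < n, Subsingleton (extGroup A i (IsLocalRing.ResidueField A) A) := by
  constructor
  · intro h i hi
    exact not_nontrivial_iff_subsingleton.1 (Nat.notMem_of_lt_sInf (hi.trans_le h))
  · intro h
    refine le_csInf (exists_nontrivial_ext_residueField A) fun i hi ↦ ?_
    by_contra! hlt
    exact not_nontrivial_iff_subsingleton.2 (h i hlt) hi

theorem subsingleton_ext_congr {R : Type} [CommRing R] (N : ModuleCat.{0} R)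
    {M M' : ModuleCat.{0} R} (e : M ≅ M') (i : ℕ) :
    Subsingleton (Abelian.Ext N M i) ↔ Subsingleton (Abelian.Ext N M' i) :=
  ((extFunctorObj N i).mapIso e).addCommGroupIsoToAddEquiv.subsingleton_congr

/-- `ModuleCat.localizedModule` agrees with any other localization of the module. -/
noncomputable def localizedModuleIso {R : Type} [CommRing R] (S : Submonoid R) (M : ModuleCat.{0} R)
    {N : Type} [AddCommGroup N] [Module R N] [Module (Localization S) N]
    [IsScalarTower R (Localization S) N] (g : M →ₗ[R] N) [IsLocalizedModule S g] :
    M.localizedModule S ≅ ModuleCat.of (Localization S) N :=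
  ((IsLocalizedModule.linearEquiv S (M.localizedModuleMkLinearMap S) g).extendScalarsOfIsLocalization
    S (Localization S)).toModuleIso

theorem le_depthOf_atPrime_iff {R : Type} [CommRing R] [IsNoetherianRing R] (p : Ideal R)
    [p.IsPrime] (n : ℕ) :
    n ≤ depthOf (Localization.AtPrime p) ↔ ∀ i < n, Subsingleton (Abelian.Ext
      (ModuleCat.of (Localization.AtPrime p) (IsLocalRing.ResidueField (Localization.AtPrime p)))
      ((ModuleCat.of R R).localizedModule p.primeCompl) i) := by
  rw [le_depthOf_iff]
  refine forall_congr' fun i ↦ forall_congr' fun _ ↦ ?_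
  rw [subsingleton_extGroup_iff]
  exact subsingleton_ext_congr _ (localizedModuleIso p.primeCompl (ModuleCat.of R R)
    (Algebra.linearMap R (Localization.AtPrime p))).symm i

theorem subsingleton_linearMap_coker_dualMap {R : Type*} [CommRing R] {F₁ F₀ : Type*}
    [AddCommGroup F₁] [Module R F₁] [Module.IsReflexive R F₁]
    [AddCommGroup F₀] [Module R F₀] [Module.Free R F₀] {φ : F₁ →ₗ[R] F₀}
    (hφ : Function.Injective φ) :
    Subsingleton ((Module.Dual R F₁ ⧸ LinearMap.range φ.dualMap) →ₗ[R] R) := by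
  refine subsingleton_of_forall_eq 0 fun f ↦ ?_
  obtain ⟨v, hv⟩ := (Module.evalEquiv R F₁).surjective (f ∘ₗ Submodule.mkQ _)
  have hv' (ψ : Module.Dual R F₁) : ψ v = f (Submodule.Quotient.mk ψ) :=
    LinearMap.congr_fun hv ψ
  have hv0 : v = 0 := by
    rw [← map_eq_zero_iff φ hφ, ← Module.forall_dual_apply_eq_zero_iff R]
    intro ψ
    have := hv' (φ.dualMap ψ)
    rwa [(Submodule.Quotient.mk_eq_zero _).2 (LinearMap.mem_range_self _ _), map_zero] at this
  ext ψ
  simpa [hv0] using (hv' ψ).symm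

end

/-- Let `R` be a Noetherian local ring whose total quotient ring is semisimple
and `M` a finite `R`-module with a finite free resolution `0 → F₁ →φ F₀ → M → 0`.
For `k ≥ 1`, `M` is `k`-torsion free (i.e. `Ext^i_R(D(M), R) = 0` for `1 ≤ i ≤ k`, where
`D(M) = Coker(φ*)`) iff `depth(R_𝔭) ≥ k + 1` for every prime `𝔭` in the support of `D(M)`. -/
theorem k_torsion_free_iff_depth
    (R : Type) [CommRing R] [IsNoetherianRing R] [IsLocalRing R]
    [IsSemisimpleRing (Localization (nonZeroDivisors R))]
    (M : Type) [AddCommGroup M] [Module R M] [Module.Finite R M]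
    (n₁ n₀ : ℕ) (φ : (Fin n₁ → R) →ₗ[R] (Fin n₀ → R)) (π : (Fin n₀ → R) →ₗ[R] M)
    (hinj : Function.Injective φ) (hex : Function.Exact φ π)
    (hsurj : Function.Surjective π)
    (k : ℕ) (hk : 1 ≤ k) :
    (∀ i, 1 ≤ i → i ≤ k →
      Subsingleton (extGroup R i
        (Module.Dual R (Fin n₁ → R) ⧸ LinearMap.range φ.dualMap) R)) ↔
    (∀ (𝔭 : Ideal R) [𝔭.IsPrime],
      Nontrivial (LocalizedModule 𝔭.primeCompl
        (Module.Dual R (Fin n₁ → R) ⧸ LinearMap.range φ.dualMap)) →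
      k + 1 ≤ depthOf (Localization.AtPrime 𝔭)) := by
  let D := ModuleCat.of R (Module.Dual R (Fin n₁ → R) ⧸ LinearMap.range φ.dualMap)
  have h0 : Subsingleton (Abelian.Ext D (ModuleCat.of R R) 0) :=
    (Abelian.Ext.addEquiv₀.trans ModuleCat.homAddEquiv).subsingleton_congr.2
      (subsingleton_linearMap_coker_dualMap hinj)
  have hL : (∀ i, 1 ≤ i → i ≤ k → Subsingleton (extGroup R i
        (Module.Dual R (Fin n₁ → R) ⧸ LinearMap.range φ.dualMap) R)) ↔
      ∀ i < k + 1, Subsingleton (Abelian.Ext D (ModuleCat.of R R) i) := by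
    refine ⟨fun h i hi ↦ ?_, fun h i _ hi ↦ (subsingleton_extGroup_iff R i _ _).2 (h i (by lia))⟩
    rcases i.eq_zero_or_pos with rfl | hi'
    · exact h0
    · exact (subsingleton_extGroup_iff R i _ _).1 (h i hi' (by lia))
  rw [hL, subsingleton_ext_lt_iff_forall_prime]
  refine forall_congr' fun p ↦ forall_congr' fun _ ↦ ?_
  rw [le_depthOf_atPrime_iff]
  refine imp_congr_left ?_
  exact (Module.mem_support_iff_of_finite (p := ⟨p, ‹_›⟩)).symm.trans Module.mem_support_iff
end

section
/- Let R be a finite-dimensional Noetherian local ring and 𝔭 a prime ideal of R. Then height(𝔭) ≥ depth(R) − dim(R/𝔭). -/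
open CategoryTheory

universe u

/-- If the `n`-th `Ext` module computed by left derived functors vanishes, then so does the `n`-th
`Ext` group computed in the derived category. -/
lemma subsingleton_abelianExt_of_subsingleton_ext {R : Type u} [CommRing R] (X Y : ModuleCat.{u} R)
    (n : ℕ) (h : Subsingleton (((Ext R (ModuleCat.{u} R) n).obj (Opposite.op X)).obj Y)) :
    Subsingleton (Abelian.Ext.{u} X Y n) := by
  let P := projectiveResolution X
  refine subsingleton_of_forall_eq 0 fun α ↦ ?_
  obtain ⟨f, hf, rfl⟩ := P.extMk_surjective α (n + 1) rfl
  have hz : Limits.IsZero ((P.complex.linearYonedaObj R Y).homology n) :=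
    (ModuleCat.isZero_of_subsingleton _).of_iso (P.isoExt n Y).symm
  rw [← HomologicalComplex.exactAt_iff_isZero_homology] at hz
  cases n with
  | zero =>
    rw [HomologicalComplex.exactAt_iff' _ 0 0 1 (by simp) (by simp),
      ShortComplex.moduleCat_exact_iff] at hz
    obtain ⟨g, hg⟩ := hz f hf
    have h0 : (0 : P.complex.X 0 ⟶ Y) = f := by
      refine Eq.trans ?_ hg
      change 0 = P.complex.d 0 0 ≫ (show P.complex.X 0 ⟶ Y from g)
      rw [P.complex.shape _ _ (by simp), Limits.zero_comp]
    subst h0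
    exact P.extMk_zero _ _
  | succ k =>
    rw [HomologicalComplex.exactAt_iff' _ k (k + 1) (k + 2) (by simp) (by simp),
      ShortComplex.moduleCat_exact_iff] at hz
    obtain ⟨g, hg⟩ := hz f hf
    exact (P.extMk_eq_zero_iff f _ rfl hf k rfl).2 ⟨g, hg⟩

open IsLocalRing Pointwise

section ExtVanishing

variable {R : Type u} [CommRing R] {M : Type u} [AddCommGroup M] [Module R M]

lemma subsingleton_ext_quotSMulTop (X : ModuleCat.{u} R) {x : R} (hx : IsSMulRegular M x) (i : ℕ)
    (h : Subsingleton (Abelian.Ext X (ModuleCat.of R M) i))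
    (h' : Subsingleton (Abelian.Ext X (ModuleCat.of R M) (i + 1))) :
    Subsingleton (Abelian.Ext X (ModuleCat.of R (QuotSMulTop x M)) i) := by
  have hS := IsSMulRegular.smulShortComplex_shortExact (M := ModuleCat.of R M) hx
  refine subsingleton_of_forall_eq 0 fun α ↦ ?_
  obtain ⟨β, hβ⟩ := Abelian.Ext.covariant_sequence_exact₃ X hS α rfl (h'.elim _ _)
  have hβ0 : β = 0 := h.elim _ _
  rw [← hβ, hβ0, Abelian.Ext.zero_comp]
  rfl

lemma exists_notMem_smul_top_of_isSMulRegular [IsLocalRing R] [IsNoetherian R M] {x : R}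
    (hx : x ∈ maximalIdeal R) (hreg : IsSMulRegular M x) {I : Ideal R} {m : M} (hm : m ≠ 0)
    (hI : ∀ a ∈ I, a • m = 0) :
    ∃ m' : M, m' ∉ x • (⊤ : Submodule R M) ∧ ∀ a ∈ I, a • m' = 0 := by
  let N : Submodule R M := Submodule.torsionBySet R M I
  have hmem (y : M) : y ∈ N ↔ ∀ a ∈ I, a • y = 0 := by
    simp [N, Submodule.mem_torsionBySet_iff]
  by_contra! H
  have hN : N ≤ x • N := fun y hy ↦ by
    by_contra hyx
    rw [hmem] at hy
    obtain ⟨a, ha, hay⟩ := H y fun hy' ↦ by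
      obtain ⟨z, -, rfl⟩ := Submodule.mem_smul_pointwise_iff_exists _ _ _ |>.1 hy'
      refine hyx (Submodule.smul_mem_pointwise_smul _ _ _ ((hmem z).2 fun a ha ↦ hreg ?_))
      simpa [smul_comm x a] using hy a ha
    exact hay (hy a ha)
  have hbot : N = ⊥ := by
    refine Submodule.eq_bot_of_le_smul_of_le_jacobson_bot (Ideal.span {x}) N
      (IsNoetherian.noetherian N) ?_ ?_
    · rwa [Submodule.ideal_span_singleton_smul]
    · rw [IsLocalRing.jacobson_eq_maximalIdeal _ bot_ne_top]
      simpa using hx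
  exact hm (by simpa [hbot] using (hmem m).2 hI)

variable [IsNoetherianRing R] [Module.Finite R M]

lemma exists_ne_zero_forall_smul_eq_zero_of_forall_not_isSMulRegular {I : Ideal R}
    (h : ∀ x ∈ I, ¬ IsSMulRegular M x) : ∃ m : M, m ≠ 0 ∧ ∀ a ∈ I, a • m = 0 := by
  have hns : ¬ Subsingleton ((R ⧸ I) →ₗ[R] M) := by
    rw [IsSMulRegular.subsingleton_linearMap_iff, Ideal.annihilator_quotient]
    rintro ⟨r, hr, hreg⟩
    exact h r hr hreg
  rw [not_subsingleton_iff_nontrivial] at hns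
  obtain ⟨f, hf⟩ := exists_ne (0 : (R ⧸ I) →ₗ[R] M)
  refine ⟨f 1, fun h1 ↦ hf ?_, fun a ha ↦ ?_⟩
  · ext
    simpa using h1
  · rw [← map_smul, Algebra.smul_def, mul_one, Ideal.Quotient.algebraMap_eq,
      Ideal.Quotient.eq_zero_iff_mem.2 ha, map_zero]

variable [IsLocalRing R]

lemma exists_mem_maximalIdeal_isSMulRegular
    (h : Subsingleton (Abelian.Ext (ModuleCat.of R (ResidueField R)) (ModuleCat.of R M) 0)) :
    ∃ x ∈ maximalIdeal R, IsSMulRegular M x := by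
  have : Subsingleton (ResidueField R →ₗ[R] M) :=
    ((ModuleCat.homEquiv (M := ModuleCat.of R (ResidueField R)) (N := ModuleCat.of R M)).symm.trans
      Abelian.Ext.homEquiv₀.symm).subsingleton
  obtain ⟨x, hx, hreg⟩ := IsSMulRegular.subsingleton_linearMap_iff.1 this
  exact ⟨x, by rwa [← Ideal.annihilator_quotient (I := maximalIdeal R)], hreg⟩

theorem le_coheight_of_subsingleton_ext (n : ℕ)
    (h : ∀ i < n,
      Subsingleton (Abelian.Ext (ModuleCat.of R (ResidueField R)) (ModuleCat.of R M) i))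
    (p : PrimeSpectrum R) {m : M} (hm : m ≠ 0) (hp : ∀ a ∈ p.asIdeal, a • m = 0) :
    (n : ℕ∞) ≤ Order.coheight p := by
  induction n generalizing M p with
  | zero => simp
  | succ n ih =>
    obtain ⟨x, hx, hreg⟩ := exists_mem_maximalIdeal_isSMulRegular (h 0 n.succ_pos)
    obtain ⟨m', hm', hpm'⟩ := exists_notMem_smul_top_of_isSMulRegular hx hreg hm hp
    let y : QuotSMulTop x M := Submodule.Quotient.mk m'
    have hy : y ≠ 0 := by simpa [y, Submodule.Quotient.mk_eq_zero] using hm'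
    obtain ⟨P, hP, hle⟩ := exists_le_isAssociatedPrime_of_isNoetherianRing R y hy
    obtain ⟨hprime, z, rfl⟩ := isAssociatedPrime_iff.1 hP
    let q : PrimeSpectrum R := ⟨_, hprime⟩
    have hpq : p < q := by
      refine lt_of_le_of_ne (fun a ha ↦ hle ?_) fun hpq ↦ ?_
      · rw [Submodule.mem_colon_singleton, Submodule.mem_bot]
        simp [y, ← Submodule.Quotient.mk_smul, hpm' a ha]
      · have hxq : x ∈ q.asIdeal := hle <| by
          rw [Submodule.mem_colon_singleton, Submodule.mem_bot, ← Submodule.Quotient.mk_smul,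
            Submodule.Quotient.mk_eq_zero]
          exact Submodule.smul_mem_pointwise_smul _ _ _ trivial
        refine hm (hreg ?_)
        simpa using hp x (hpq ▸ hxq)
    have hz : z ≠ 0 := by
      rintro rfl
      exact hprime.ne_top (by simp [Ideal.eq_top_iff_one, Submodule.mem_colon_singleton])
    have hn := ih (fun i hi ↦ subsingleton_ext_quotSMulTop _ hreg i (h i (by lia))
      (h (i + 1) (by lia))) q hz fun a ha ↦ by simpa [q, Submodule.mem_colon_singleton] using ha
    calc ((n + 1 : ℕ) : ℕ∞) ≤ Order.coheight q + 1 := by push_cast; gcongr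
      _ ≤ Order.coheight p := Order.coheight_add_one_le hpq

theorem exists_ltSeries_le_length_add_coheight (n : ℕ)
    (h : ∀ i < n,
      Subsingleton (Abelian.Ext (ModuleCat.of R (ResidueField R)) (ModuleCat.of R M) i))
    (p : PrimeSpectrum R) (hp : p ∈ Module.support R M) :
    ∃ s : LTSeries (PrimeSpectrum R), s.head ∈ Module.support R M ∧ s.last = p ∧
      (n : ℕ∞) ≤ s.length + Order.coheight p := by
  induction n generalizing M with
  | zero => exact ⟨RelSeries.singleton _ p, by simpa using hp, by simp, by simp⟩
  | succ n ih =>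
    by_cases hreg : ∃ x ∈ p.asIdeal, IsSMulRegular M x
    · obtain ⟨x, hxp, hreg⟩ := hreg
      obtain ⟨s, hs, hsp, hn⟩ := ih (M := QuotSMulTop x M)
        (fun i hi ↦ subsingleton_ext_quotSMulTop _ hreg i (h i (by lia)) (h (i + 1) (by lia)))
        (by simpa using ⟨hp, hxp⟩)
      rw [Module.support_quotSMulTop, Set.mem_inter_iff, PrimeSpectrum.mem_zeroLocus,
        Set.singleton_subset_iff] at hs
      obtain ⟨q, hq, hqs⟩ := Ideal.exists_minimalPrimes_le (Module.mem_support_iff_of_finite.1 hs.1)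
      let q' : PrimeSpectrum R := ⟨q, hq.isPrime⟩
      have hlt : q' < s.head := lt_of_le_of_ne hqs fun he ↦
        hreg.notMem_of_mem_minimalPrimes hq (show x ∈ q'.asIdeal from he ▸ hs.2)
      refine ⟨s.cons q' hlt, ?_, by simpa using hsp, ?_⟩
      · simpa using Module.mem_support_iff_of_finite.2 hq.1.2
      · rw [RelSeries.cons_length]
        push_cast
        rw [add_right_comm]
        gcongr
    · push Not at hreg
      obtain ⟨m, hm, hpm⟩ := exists_ne_zero_forall_smul_eq_zero_of_forall_not_isSMulRegular hreg
      exact ⟨RelSeries.singleton _ p, by simpa using hp, by simp,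
        by simpa using le_coheight_of_subsingleton_ext (n + 1) h p hm hpm⟩

end ExtVanishing

lemma ringKrullDim_quotient_eq_coheight {R : Type*} [CommRing R] (p : PrimeSpectrum R) :
    ringKrullDim (R ⧸ p.asIdeal) = Order.coheight p := by
  rw [ringKrullDim_quotient, Order.coheight_eq_krullDim_Ici]
  rfl

/-- For a finite-dimensional Noetherian local ring `R` and a prime `𝔭`,
`height 𝔭 ≥ depth R − dim (R/𝔭)`, stated as `depth R ≤ height 𝔭 + dim (R/𝔭)`,
where `height 𝔭 = dim R_𝔭`. -/
theorem height_ge_depth_sub_dim_quot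
    (R : Type) [CommRing R] [IsNoetherianRing R] [IsLocalRing R]
    (hfin : ringKrullDim R < ⊤)
    (𝔭 : Ideal R) [𝔭.IsPrime] :
    ((depthOf R : ℕ) : WithBot (WithTop ℕ)) ≤
      ringKrullDim (Localization.AtPrime 𝔭) + ringKrullDim (R ⧸ 𝔭) := by
  let p : PrimeSpectrum R := ⟨𝔭, ‹_›⟩
  have hExt : ∀ i < depthOf R,
      Subsingleton (Abelian.Ext (ModuleCat.of R (ResidueField R)) (ModuleCat.of R R) i) :=
    fun i hi ↦ subsingleton_abelianExt_of_subsingleton_ext _ _ i <|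
      not_nontrivial_iff_subsingleton.1 (Nat.notMem_of_lt_sInf hi)
  obtain ⟨s, -, hs, hle⟩ := exists_ltSeries_le_length_add_coheight (depthOf R) hExt p
    (Module.mem_support_iff_of_finite.2
      (by simp [Module.annihilator_eq_bot.2 inferInstance]))
  rw [IsLocalization.AtPrime.ringKrullDim_eq_height 𝔭, ringKrullDim_quotient_eq_coheight p]
  have hlen : (s.length : ℕ∞) ≤ 𝔭.height :=
    (hs ▸ Order.length_le_height_last).trans_eq (PrimeSpectrum.height_eq_orderHeight p).symm
  exact WithBot.coe_le_coe.2 (hle.trans (add_le_add_left hlen _))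
end

section
/- Let R be a commutative Noetherian ring and M a finite R-module with presentation P₁ →^φ P₀ → M → 0 by finite free modules, and let D(M) = Coker(φ*). Then there is an exact sequence 0 → Ext^1_R(D(M), R) → M →^f M** → Ext^2_R(D(M), R) → 0, where f is the canonical evaluation map into the bidual. -/
open CategoryTheory

namespace CategoryTheory

open Limits

section Resolution

variable {C : Type*} [Category* C] [Abelian C] [EnoughProjectives C]
  {X₀ X₁ Z : C} (d : X₁ ⟶ X₀)

lemma Projective.d_comp {X Y : C} (f : X ⟶ Y) : Projective.d f ≫ f = 0 :=
  (Category.assoc _ _ _).trans ((congrArg _ (kernel.condition f)).trans comp_zero)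

/-- A projective object covering the kernel of a morphism, with the induced map. -/
noncomputable def Projective.syzygyStep {X Y : C} (f : X ⟶ Y) :
    Σ' (K : C) (k : K ⟶ X), k ≫ f = 0 :=
  ⟨Projective.syzygies f, Projective.d f, Projective.d_comp f⟩

/-- The chain complex extending a morphism to the left by projective covers of successive
kernels. -/
noncomputable def ChainComplex.ofHomSyzygies : ChainComplex C ℕ :=
  ChainComplex.mk' X₀ X₁ d Projective.syzygyStep

lemma ChainComplex.ofHomSyzygies_d_one_zero :
    (ChainComplex.ofHomSyzygies d).d 1 0 = d := by
  simp [ChainComplex.ofHomSyzygies]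

lemma ChainComplex.ofHomSyzygies_exactAt_succ (n : ℕ) :
    (ChainComplex.ofHomSyzygies d).ExactAt (n + 1) := by
  rw [HomologicalComplex.exactAt_iff' _ (n + 2) (n + 1) n (by simp) (by simp)]
  let e : Projective.syzygies ((ChainComplex.ofHomSyzygies d).d (n + 1) n) ≅
      (ChainComplex.ofHomSyzygies d).X (n + 2) :=
    (ChainComplex.mk'XIso X₀ X₁ d Projective.syzygyStep n).symm
  have he : e.hom ≫ (ChainComplex.ofHomSyzygies d).d (n + 2) (n + 1) = Projective.d _ :=
    (Iso.inv_comp_eq _).2 (ChainComplex.mk'_d X₀ X₁ d Projective.syzygyStep n)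
  let i : ShortComplex.mk _ _ (Projective.d_comp ((ChainComplex.ofHomSyzygies d).d (n + 1) n)) ≅
      (ChainComplex.ofHomSyzygies d).sc' (n + 2) (n + 1) n :=
    ShortComplex.isoMk e (Iso.refl _) (Iso.refl _) (he.trans (Category.comp_id _).symm)
      ((Category.id_comp _).trans (Category.comp_id _).symm)
  exact ShortComplex.exact_of_iso i (exact_d_f _)

lemma ChainComplex.projective_ofHomSyzygies_X [Projective X₀] [Projective X₁] (n : ℕ) :
    Projective ((ChainComplex.ofHomSyzygies d).X n) := by
  obtain (_ | _ | _ | n) := n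
  · assumption
  · assumption
  all_goals apply Projective.projective_over

/-- A projective presentation extends to a projective resolution. -/
noncomputable def ProjectiveResolution.ofPresentation (p : X₀ ⟶ Z) (w : d ≫ p = 0)
    (h : (ShortComplex.mk d p w).Exact) [Epi p] [Projective X₀] [Projective X₁] :
    ProjectiveResolution Z where
  complex := ChainComplex.ofHomSyzygies d
  projective := ChainComplex.projective_ofHomSyzygies_X d
  π := (ChainComplex.toSingle₀Equiv _ _).symm ⟨p,
    (congrArg (· ≫ p) (ChainComplex.ofHomSyzygies_d_one_zero d)).trans w⟩
  quasiIso := ⟨fun n => by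
    cases n
    · rw [ChainComplex.quasiIsoAt₀_iff, ShortComplex.quasiIso_iff_of_zeros']
      · refine (ShortComplex.exact_and_epi_g_iff_of_iso ?_).2 ⟨h, inferInstance⟩
        exact ShortComplex.isoMk (Iso.refl X₁) (Iso.refl X₀) (Iso.refl Z)
          ((Category.id_comp _).trans
            ((ChainComplex.ofHomSyzygies_d_one_zero d).symm.trans (Category.comp_id _).symm))
          ((Category.id_comp p).trans
            (Eq.trans (by exact (ChainComplex.toSingle₀Equiv_symm_apply_f_zero
                (C := ChainComplex.ofHomSyzygies d) p _).symm)
              (Category.comp_id _).symm))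
      all_goals rfl
    · rw [quasiIsoAt_iff_exactAt']
      · apply ChainComplex.ofHomSyzygies_exactAt_succ
      · apply ChainComplex.exactAt_succ_single_obj⟩

end Resolution

end CategoryTheory

/-- `Ext` in positive degree is the module of cocycles modulo coboundaries of a projective
resolution. -/
lemma CategoryTheory.ProjectiveResolution.exists_cocycles_to_ext {R : Type} [CommRing R]
    {X : ModuleCat.{0} R} (P : ProjectiveResolution X) (Y : ModuleCat.{0} R) (n : ℕ) :
    ∃ q : LinearMap.ker (LinearMap.lcomp R Y (P.complex.d (n + 2) (n + 1)).hom) →ₗ[R]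
        ((Ext R (ModuleCat R) (n + 1)).obj (Opposite.op X)).obj Y,
      Function.Surjective q ∧
      ∀ x, q x = 0 ↔ ∃ y, LinearMap.lcomp R Y (P.complex.d (n + 1) n).hom y = x := by
  let K := P.complex.linearYonedaObj R Y
  let S := K.sc' n (n + 1) (n + 2)
  let e : ((Ext R (ModuleCat R) (n + 1)).obj (Opposite.op X)).obj Y ≅
      S.moduleCatLeftHomologyData.H :=
    P.isoExt (n + 1) Y ≪≫ K.homologyIsoSc' n (n + 1) (n + 2) (by simp) (by simp) ≪≫
      S.moduleCatHomologyIso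
  have hS (x) : S.g x = 0 ↔ LinearMap.lcomp R Y (P.complex.d (n + 2) (n + 1)).hom x.hom = 0 :=
    ModuleCat.hom_ext_iff
  let c : LinearMap.ker (LinearMap.lcomp R Y (P.complex.d (n + 2) (n + 1)).hom) →ₗ[R]
      LinearMap.ker S.g.hom :=
    { toFun x := ⟨ModuleCat.ofHom x.1, (hS _).2 x.2⟩
      map_add' _ _ := rfl
      map_smul' _ _ := rfl }
  have hc : Function.Surjective c := fun z => ⟨⟨ModuleCat.Hom.hom z.1, (hS _).1 z.2⟩, rfl⟩
  refine ⟨e.toLinearEquiv.symm.toLinearMap ∘ₗ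
    (LinearMap.range S.moduleCatToCycles).mkQ ∘ₗ c, ?_, fun x => ?_⟩
  · exact e.toLinearEquiv.symm.surjective.comp ((Submodule.mkQ_surjective _).comp hc)
  · have h : c x ∈ LinearMap.range S.moduleCatToCycles ↔
        ∃ y, LinearMap.lcomp R Y (P.complex.d (n + 1) n).hom y = x :=
      ⟨fun ⟨y, hy⟩ => ⟨ModuleCat.Hom.hom y, congrArg (fun z => ModuleCat.Hom.hom z.1) hy⟩,
        fun ⟨y, hy⟩ => ⟨ModuleCat.ofHom y, Subtype.ext (ModuleCat.hom_ext hy)⟩⟩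
    rw [← h, ← Submodule.Quotient.mk_eq_zero]
    exact e.toLinearEquiv.symm.map_eq_zero_iff

/-- First and second `Ext` of the cokernel of a map between projective modules, computed from
an exact continuation of that map to the left. -/
lemma exists_ext_of_projective_presentation {R X₀ X₁ D : Type} [CommRing R]
    [AddCommGroup X₀] [Module R X₀] [AddCommGroup X₁] [Module R X₁] [AddCommGroup D] [Module R D]
    [Module.Projective R X₀] [Module.Projective R X₁]
    (d : X₁ →ₗ[R] X₀) (p : X₀ →ₗ[R] D) (h : Function.Exact d p) (hp : Function.Surjective p)
    (Y : Type) [AddCommGroup Y] [Module R Y] :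
    ∃ (X₂ X₃ : ModuleCat.{0} R) (d₂ : X₂ →ₗ[R] X₁) (d₃ : X₃ →ₗ[R] X₂)
      (q₁ : LinearMap.ker (LinearMap.lcomp R Y d₂) →ₗ[R] extGroup R 1 D Y)
      (q₂ : LinearMap.ker (LinearMap.lcomp R Y d₃) →ₗ[R] extGroup R 2 D Y),
      Function.Exact d₂ d ∧ Function.Exact d₃ d₂ ∧
      Function.Surjective q₁ ∧ (∀ x, q₁ x = 0 ↔ ∃ y, LinearMap.lcomp R Y d y = x) ∧
      Function.Surjective q₂ ∧ (∀ x, q₂ x = 0 ↔ ∃ y, LinearMap.lcomp R Y d₂ y = x) := by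
  have : Projective (ModuleCat.of R X₀) := ModuleCat.projective_of_categoryTheory_projective _
  have : Projective (ModuleCat.of R X₁) := ModuleCat.projective_of_categoryTheory_projective _
  have : Epi (ModuleCat.ofHom p) := (ModuleCat.epi_iff_surjective _).2 hp
  let P := ProjectiveResolution.ofPresentation (ModuleCat.ofHom d) (ModuleCat.ofHom p)
    (by ext x; exact h.apply_apply_eq_zero x) (ModuleCat.shortComplex_exact _ h)
  have hd : P.complex.d 1 0 = ModuleCat.ofHom d := ChainComplex.ofHomSyzygies_d_one_zero _
  have hP (n : ℕ) : Function.Exact (P.complex.d (n + 2) (n + 1)) (P.complex.d (n + 1) n) :=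
    (ShortComplex.ShortExact.moduleCat_exact_iff_function_exact _).1 (P.exact_succ n)
  obtain ⟨q₁, hq₁, hq₁'⟩ := P.exists_cocycles_to_ext (ModuleCat.of R Y) 0
  obtain ⟨q₂, hq₂, hq₂'⟩ := P.exists_cocycles_to_ext (ModuleCat.of R Y) 1
  have h0 := hP 0
  simp only at hq₁' h0
  rw [hd] at hq₁' h0
  exact ⟨P.complex.X 2, P.complex.X 3, (P.complex.d 2 1).hom, (P.complex.d 3 2).hom, q₁, q₂,
    h0, hP 1, hq₁, hq₁', hq₂, hq₂'⟩

lemma LinearMap.exists_injective_comp_eq {R K E M : Type*} [Ring R] [AddCommGroup K] [Module R K]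
    [AddCommGroup E] [Module R E] [AddCommGroup M] [Module R M]
    (q : K →ₗ[R] E) (α : K →ₗ[R] M) (hq : Function.Surjective q)
    (h : ∀ x, q x = 0 ↔ α x = 0) :
    ∃ g : E →ₗ[R] M, Function.Injective g ∧ ∀ x, g (q x) = α x := by
  have hker : LinearMap.ker q = LinearMap.ker α := by ext x; exact h x
  let e := q.quotKerEquivOfSurjective hq
  have he (x : K) : e.symm (q x) = (LinearMap.ker q).mkQ x :=
    e.symm_apply_eq.2 rfl
  have hg (x : K) : ((LinearMap.ker q).liftQ α hker.le ∘ₗ e.symm.toLinearMap) (q x) = α x := by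
    simp [he]
  refine ⟨_, (injective_iff_map_eq_zero _).2 fun y hy => ?_, hg⟩
  obtain ⟨x, rfl⟩ := hq y
  rw [hg] at hy
  exact (h x).2 hy

lemma LinearMap.exists_comp_eq_of_exact {R A B C : Type*} [Ring R] [AddCommGroup A] [Module R A]
    [AddCommGroup B] [Module R B] [AddCommGroup C] [Module R C]
    (f : A →ₗ[R] B) (i : C →ₗ[R] B) (hi : Function.Injective i)
    (h : LinearMap.range f = LinearMap.range i) :
    ∃ e : A →ₗ[R] C, i ∘ₗ e = f ∧ Function.Surjective e := by
  let j := LinearEquiv.ofInjective i hi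
  have he (x : A) : i (j.symm (f.codRestrict (LinearMap.range i)
      (fun x => h ▸ LinearMap.mem_range_self f x) x)) = f x :=
    congrArg Subtype.val (j.apply_symm_apply _)
  refine ⟨j.symm.toLinearMap ∘ₗ f.codRestrict (LinearMap.range i)
      (fun x => h ▸ LinearMap.mem_range_self f x), LinearMap.ext he, fun y => ?_⟩
  obtain ⟨x, hx⟩ : i y ∈ LinearMap.range f := h ▸ LinearMap.mem_range_self i y
  exact ⟨x, hi ((he x).trans hx)⟩

/-- (Auslander–Bridger sequence) For a finite module `M` over a commutative
Noetherian ring `R` with a finite free presentation `P₁ →φ P₀ → M → 0` and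
`D(M) = Coker(φ*)`, there is an exact sequence
`0 → Ext¹_R(D(M), R) → M →f M** → Ext²_R(D(M), R) → 0`,
where `f` is the evaluation map into the bidual. -/
theorem auslander_bridger_exact_sequence
    (R : Type) [CommRing R] [IsNoetherianRing R]
    (M : Type) [AddCommGroup M] [Module R M] [Module.Finite R M]
    (n₁ n₀ : ℕ) (φ : (Fin n₁ → R) →ₗ[R] (Fin n₀ → R)) (π : (Fin n₀ → R) →ₗ[R] M)
    (hex : Function.Exact φ π) (hsurj : Function.Surjective π) :
    ∃ (g₁ : extGroup R 1 (Module.Dual R (Fin n₁ → R) ⧸ LinearMap.range φ.dualMap) R →ₗ[R] M)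
      (g₂ : Module.Dual R (Module.Dual R M) →ₗ[R]
        extGroup R 2 (Module.Dual R (Fin n₁ → R) ⧸ LinearMap.range φ.dualMap) R),
      Function.Injective g₁ ∧
      Function.Exact g₁ (Module.Dual.eval R M) ∧
      Function.Exact (Module.Dual.eval R M) g₂ ∧
      Function.Surjective g₂ := by
  obtain ⟨X₂, X₃, d₂, d₃, q₁, q₂, h₂, h₃, hq₁, hq₁', hq₂, hq₂'⟩ :=
    exists_ext_of_projective_presentation φ.dualMap (LinearMap.range φ.dualMap).mkQ
      (LinearMap.exact_map_mkQ_range _) (Submodule.mkQ_surjective _) R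
  have hπφ : Function.Exact π.dualMap φ.dualMap := by
    rw [LinearMap.exact_iff, LinearMap.range_dualMap_eq_dualAnnihilator_ker_of_surjective π hsurj,
      LinearMap.ker_dualMap_eq_dualAnnihilator_range, hex.linearMap_ker_eq]
  obtain ⟨e, he, hesurj⟩ := LinearMap.exists_comp_eq_of_exact d₂ π.dualMap
    (LinearMap.dualMap_injective_of_surjective hsurj)
    (h₂.linearMap_ker_eq.symm.trans hπφ.linearMap_ker_eq)
  have hd₂ (x) : d₂ x = π.dualMap (e x) := (LinearMap.congr_fun he x).symm
  have h₃e : Function.Exact d₃ e := fun x => by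
    rw [← h₃ x, hd₂, map_eq_zero_iff _ (LinearMap.dualMap_injective_of_surjective hsurj)]
  let ε := Module.evalEquiv R (Fin n₀ → R)
  let α : LinearMap.ker (LinearMap.lcomp R R d₂) →ₗ[R] M :=
    π ∘ₗ ε.symm.toLinearMap ∘ₗ Submodule.subtype _
  have hε (p) (x) : ε p (d₂ x) = Module.Dual.eval R M (π p) (e x) := by rw [hd₂]; rfl
  have hεker (p) : ε p ∈ LinearMap.ker (LinearMap.lcomp R R d₂) ↔
      Module.Dual.eval R M (π p) = 0 := by
    refine ⟨fun h => LinearMap.ext fun f => ?_, fun h => LinearMap.ext fun x => ?_⟩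
    · obtain ⟨x, rfl⟩ := hesurj f
      exact (hε p x).symm.trans (LinearMap.congr_fun h x)
    · exact (hε p x).trans (LinearMap.congr_fun h (e x))
  have hα (x) : q₁ x = 0 ↔ α x = 0 := by
    obtain ⟨p, hp⟩ := ε.surjective x.1
    have hαx : α x = π p := congrArg π (ε.symm_apply_eq.2 hp.symm)
    rw [hq₁', hαx, hex p, ← hp]
    constructor
    · rintro ⟨y, hy⟩
      obtain ⟨z, rfl⟩ := (Module.evalEquiv R (Fin n₁ → R)).surjective y
      exact ⟨z, ε.injective hy⟩
    · rintro ⟨z, rfl⟩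
      exact ⟨Module.Dual.eval R _ z, rfl⟩
  obtain ⟨g₁, hg₁, hg₁q⟩ := LinearMap.exists_injective_comp_eq
    (K := LinearMap.ker (LinearMap.lcomp R R d₂)) q₁ α hq₁ hα
  let β : Module.Dual R (Module.Dual R M) →ₗ[R] LinearMap.ker (LinearMap.lcomp R R d₃) :=
    (LinearMap.lcomp R R e).codRestrict _ fun θ => LinearMap.ext fun x =>
      (congrArg θ (h₃e.apply_apply_eq_zero x)).trans θ.map_zero
  have hβ : Function.Surjective β := by
    intro y
    obtain ⟨θ, hθ⟩ := (LinearMap.exact_lcomp_of_exact_of_surjective R h₃e hesurj y.1).1 y.2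
    exact ⟨θ, Subtype.ext hθ⟩
  refine ⟨g₁, q₂ ∘ₗ β, hg₁, fun m => ?_, fun θ => ?_, hq₂.comp hβ⟩
  · obtain ⟨p, rfl⟩ := hsurj m
    rw [← hεker]
    constructor
    · intro h
      exact ⟨q₁ ⟨ε p, h⟩, (hg₁q _).trans (congrArg π (ε.symm_apply_apply p))⟩
    · rintro ⟨z, hz⟩
      obtain ⟨x, rfl⟩ := hq₁ z
      obtain ⟨p', hp'⟩ := ε.surjective x.1
      have hπ : π p' = π p := by
        rw [← hz, hg₁q]
        exact congrArg π (ε.symm_apply_eq.2 hp'.symm).symm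
      rw [hεker, ← hπ, ← hεker, hp']
      exact x.2
  · rw [LinearMap.comp_apply, hq₂']
    constructor
    · rintro ⟨y, hy⟩
      obtain ⟨p, rfl⟩ := ε.surjective y
      refine ⟨π p, LinearMap.ext fun f => ?_⟩
      obtain ⟨x, rfl⟩ := hesurj f
      exact (hε p x).symm.trans (LinearMap.congr_fun hy x)
    · rintro ⟨m, rfl⟩
      obtain ⟨p, rfl⟩ := hsurj m
      exact ⟨ε p, LinearMap.ext (hε p)⟩
end
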